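/- arXiv:2508.14867 — 2 statements merged into one kernel-verified Lean document; each statement's English description precedes it below -/
import Mathlib

section
/- Let B be a nonempty finite set with p elements, and let μ, ν : B → ℝ be functions with μ(b) > 0 and ν(b) > 0 for every b ∈ B. Then |log(∑_{b∈B} μ(b)) − log(∑_{b∈B} ν(b))| ≤ p · max_{b∈B} ( |μ(b) − ν(b)| / min(μ(b), ν(b)) ). -/
/-!
If `|μ b - ν b| / min (μ b) (ν b) ≤ M` for all `b`, then `μ b ≤ (1 + M) ν b` branch by branch.
Summing gives `∑ μ / ∑ ν ≤ 1 + M`, so the difference of the logarithms is at most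
`log (1 + M) ≤ M`. The hypothesis is symmetric in `μ` and `ν`, so the absolute difference is at
most `M`. This is sharper than the claim: `M ≤ p * M` because `B` is nonempty.
-/

lemma log_sum_sub_log_sum_le {B : Type*} [Fintype B] [Nonempty B] (μ ν : B → ℝ) (M : ℝ)
    (hμ : ∀ b, 0 < μ b) (hν : ∀ b, 0 < ν b) (h : ∀ b, μ b - ν b ≤ M * ν b) :
    Real.log (∑ b, μ b) - Real.log (∑ b, ν b) ≤ M := by
  have hsμ : 0 < ∑ b, μ b := Finset.sum_pos (fun b _ => hμ b) Finset.univ_nonempty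
  have hsν : 0 < ∑ b, ν b := Finset.sum_pos (fun b _ => hν b) Finset.univ_nonempty
  have hsum : ∑ b, μ b ≤ (1 + M) * ∑ b, ν b := by
    rw [Finset.mul_sum]
    exact Finset.sum_le_sum fun b _ => by linarith [h b]
  rw [← Real.log_div hsμ.ne' hsν.ne']
  have hlog := Real.log_le_sub_one_of_pos (div_pos hsμ hsν)
  have hdiv := (div_le_iff₀ hsν).2 hsum
  linarith

/-- Core inequality of Lemma 4.1 (`lipschitz`): the logarithmic total mass of a
positive weight function on a finite set with `p` elements is `p`-Lipschitz with
respect to the sup-Finsler metric. -/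
theorem log_mass_lipschitz {B : Type*} [Fintype B] [Nonempty B] (p : ℕ)
    (hp : p = Fintype.card B) (μ ν : B → ℝ)
    (hμ : ∀ b, 0 < μ b) (hν : ∀ b, 0 < ν b) :
    |Real.log (∑ b, μ b) - Real.log (∑ b, ν b)| ≤
      (p : ℝ) * Finset.univ.sup' Finset.univ_nonempty
        (fun b => |μ b - ν b| / min (μ b) (ν b)) := by
  set M := Finset.univ.sup' Finset.univ_nonempty
    (fun b => |μ b - ν b| / min (μ b) (ν b))
  have hmin : ∀ b, 0 < min (μ b) (ν b) := fun b => lt_min (hμ b) (hν b)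
  have hle : ∀ b, |μ b - ν b| / min (μ b) (ν b) ≤ M := fun b =>
    Finset.le_sup' (fun b => |μ b - ν b| / min (μ b) (ν b)) (Finset.mem_univ b)
  have hM0 : 0 ≤ M :=
    (div_nonneg (abs_nonneg _) (hmin (Classical.arbitrary B)).le).trans (hle _)
  have habs : ∀ b, |μ b - ν b| ≤ M * min (μ b) (ν b) := fun b =>
    (div_le_iff₀ (hmin b)).1 (hle b)
  have h₁ := log_sum_sub_log_sum_le μ ν M hμ hν fun b =>
    (le_abs_self _).trans ((habs b).trans (mul_le_mul_of_nonneg_left (min_le_right _ _) hM0))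
  have h₂ := log_sum_sub_log_sum_le ν μ M hν hμ fun b => by
    have h := (habs b).trans (mul_le_mul_of_nonneg_left (min_le_left _ _) hM0)
    rw [abs_sub_comm] at h
    exact (le_abs_self _).trans h
  have hp1 : (1 : ℝ) ≤ p := by
    rw [hp]
    exact_mod_cast Fintype.card_pos (α := B)
  exact (abs_sub_le_iff.2 ⟨h₁, h₂⟩).trans (le_mul_of_one_le_left hM0 hp1)
end

section
/- Let E be a finite-dimensional real normed vector space, let φ : E → ℝ be a linear functional, let K be a nonempty compact convex subset of the affine hyperplane {x ∈ E : φ(x) = 1}, and let L : E → E be a linear map such that for every x ∈ K one has φ(L x) > 0 and (φ(L x))⁻¹ • (L x) ∈ K. Then there exist v ∈ K and λ > 0 with L v = λ • v. -/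
/-!
Mathlib has no Brouwer fixed point theorem, but for a linear map the eigenvector can be found by a
resolvent argument. Fix `x₀ ∈ K` and let `ρ` be the infimum of the `t > 0` for which
`φ (L ^ k x₀) = O(t ^ k)`. For `t > ρ` the truncated resolvent series `∑ t ^ (-k-1) L ^ k x₀`,
normalized by `φ`, lies in `K` and approximately solves `t v - L v = s x₀` with `s ≥ 0`
(`exists_approx_resolvent`). Letting `t ↓ ρ`, compactness of `K` gives `v ∈ K` and `s ≥ 0` with
`ρ v - L v = s x₀`; applying `φ` shows `ρ > 0`.

If `s = 0`, then `v` is the eigenvector. If `s > 0`, iterating the identity and applying `φ` bounds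
the partial sums of `∑ ρ ^ (-k-1) φ (L ^ k x₀)`, so `ρ ^ (-k) L ^ k x₀ → 0`. In finite dimension
such convergence is automatically geometric (`exists_geometric_bound`), so that
`φ (L ^ k x₀) = O(t ^ k)` for some `t < ρ`, contradicting the choice of `ρ`.
-/

/-- A nonnegative sequence contracted by a factor `1 / 2` every `N` steps decays geometrically. -/
lemma geometric_of_half (u : ℕ → ℝ) (hu : ∀ k, 0 ≤ u k) (N : ℕ) (hN : 0 < N)
    (h : ∀ k, u (k + N) ≤ u k / 2) :
    ∃ r : ℝ, 0 < r ∧ r < 1 ∧ ∃ D : ℝ, ∀ k, u k ≤ D * r ^ k := by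
  obtain ⟨r, hr0, hrN⟩ : ∃ r : ℝ, 0 < r ∧ r ^ N = 1 / 2 :=
    ⟨(1 / 2 : ℝ) ^ ((N : ℝ)⁻¹), by positivity,
      Real.rpow_inv_natCast_pow (by norm_num) hN.ne'⟩
  have hr1 : r < 1 := by
    by_contra! hc
    have := one_le_pow₀ hc (n := N)
    linarith
  refine ⟨r, hr0, hr1, ∑ i ∈ Finset.range N, u i / r ^ i, fun k => ?_⟩
  induction k using Nat.strong_induction_on with
  | _ k ih =>
    rcases lt_or_ge k N with hk | hk
    · have h1 : u k / r ^ k ≤ ∑ i ∈ Finset.range N, u i / r ^ i :=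
        Finset.single_le_sum (f := fun i => u i / r ^ i)
          (fun i _ => div_nonneg (hu i) (by positivity)) (Finset.mem_range.2 hk)
      exact (div_le_iff₀ (by positivity)).1 h1
    · obtain ⟨j, rfl⟩ := Nat.exists_eq_add_of_le' hk
      have h1 := ih j (by omega)
      have h2 := h j
      rw [pow_add, hrN]
      linarith

/-- In finite dimension, an orbit of a linear map which tends to `0` does so geometrically: on the
invariant subspace of all vectors with this property, the powers of the map tend to `0` in operator
norm. -/
lemma exists_geometric_bound {E : Type*} [NormedAddCommGroup E] [NormedSpace ℝ E]
    [FiniteDimensional ℝ E] (A : E →ₗ[ℝ] E) (x : E)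
    (hx : Filter.Tendsto (fun n => (A ^ n) x) Filter.atTop (nhds 0)) :
    ∃ r : ℝ, 0 < r ∧ r < 1 ∧ ∃ D : ℝ, ∀ k, ‖(A ^ k) x‖ ≤ D * r ^ k := by
  let W : Submodule ℝ E :=
    { carrier := {w | Filter.Tendsto (fun n => (A ^ n) w) Filter.atTop (nhds 0)}
      add_mem' := fun {a b} ha hb => by
        simpa using Filter.Tendsto.add ha hb
      zero_mem' := by simp
      smul_mem' := fun c a ha => by
        simpa using Filter.Tendsto.const_smul ha c }
  have hW : ∀ w ∈ W, A w ∈ W := fun w hw => by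
    have h1 : Filter.Tendsto (fun n => (A ^ (n + 1)) w) Filter.atTop (nhds 0) :=
      (Filter.tendsto_add_atTop_iff_nat 1).2 hw
    simp only [pow_succ, Module.End.mul_apply] at h1
    exact h1
  let B : W →ₗ[ℝ] W := A.restrict hW
  have hB : ∀ n (w : W), (((B ^ n) w : W) : E) = (A ^ n) (w : E) := by
    intro n
    induction n with
    | zero => intro w; simp
    | succ n ih => intro w; simp [pow_succ, ih, B]
  let b := Module.finBasis ℝ W
  -- A linear map depends continuously on its values on a basis, so pointwise convergence of
  -- `B ^ n` gives convergence in operator norm.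
  let Φ : (Fin (Module.finrank ℝ W) → W) →ₗ[ℝ] (W →L[ℝ] W) :=
    (LinearMap.toContinuousLinearMap : (W →ₗ[ℝ] W) ≃ₗ[ℝ] (W →L[ℝ] W)).toLinearMap ∘ₗ
      (b.constr ℝ).toLinearMap
  have hΦ : ∀ n, Φ (fun i => (B ^ n) (b i)) = LinearMap.toContinuousLinearMap (B ^ n) := by
    intro n
    simp only [Φ, LinearMap.comp_apply, LinearEquiv.coe_coe]
    congr 1
    exact b.ext fun i => by simp
  have hlim : Filter.Tendsto (fun n => Φ (fun i => (B ^ n) (b i))) Filter.atTop (nhds 0) := by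
    have h1 : Filter.Tendsto (fun n => fun i => (B ^ n) (b i)) Filter.atTop (nhds 0) := by
      refine tendsto_pi_nhds.2 fun i => ?_
      rw [tendsto_subtype_rng]
      simp only [hB]
      exact (b i).2
    have h2 := (LinearMap.continuous_of_finiteDimensional Φ).tendsto 0
    rw [map_zero] at h2
    exact h2.comp h1
  have hnorm : Filter.Tendsto (fun n => ‖Φ (fun i => (B ^ n) (b i))‖) Filter.atTop (nhds 0) :=
    (tendsto_norm_zero (E := W →L[ℝ] W)).comp hlim
  have hev := (hnorm.eventually (gt_mem_nhds (show (0 : ℝ) < 1 / 2 by norm_num))).and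
    (Filter.eventually_gt_atTop 0)
  obtain ⟨N, hN, hN0⟩ := hev.exists
  refine geometric_of_half _ (fun k => norm_nonneg _) N hN0 fun k => ?_
  let y : W := (B ^ k) ⟨x, hx⟩
  have h1 : ‖((Φ (fun i => (B ^ N) (b i)) y : W) : E)‖ ≤
      ‖Φ (fun i => (B ^ N) (b i))‖ * ‖(y : E)‖ :=
    (Φ (fun i => (B ^ N) (b i))).le_opNorm y
  have h2 : ((Φ (fun i => (B ^ N) (b i)) y : W) : E) = (A ^ (k + N)) x := by
    rw [hΦ, add_comm, pow_add]
    simp [hB, y]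
  have h3 : (y : E) = (A ^ k) x := by simp [y, hB]
  rw [h2, h3] at h1
  nlinarith [norm_nonneg ((A ^ k) x)]

section slice

variable {E : Type*} [NormedAddCommGroup E] [NormedSpace ℝ E]
  {φ : E →ₗ[ℝ] ℝ} {K : Set E} {L : E →ₗ[ℝ] E}

lemma iterate_mem_cone (hKsub : K ⊆ {x : E | φ x = 1})
    (hL : ∀ x ∈ K, 0 < φ (L x) ∧ (φ (L x))⁻¹ • L x ∈ K) {x : E} (hx : x ∈ K) (k : ℕ) :
    0 < φ ((L ^ k) x) ∧ (φ ((L ^ k) x))⁻¹ • (L ^ k) x ∈ K := by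
  induction k with
  | zero =>
    have h : φ x = 1 := hKsub hx
    simp [h, hx]
  | succ k ih =>
    obtain ⟨hpos, hmem⟩ := ih
    obtain ⟨h1, h2⟩ := hL _ hmem
    simp only [map_smul, smul_eq_mul] at h1 h2
    rw [pow_succ', Module.End.mul_apply]
    have h3 : 0 < φ (L ((L ^ k) x)) := by
      rwa [mul_pos_iff_of_pos_left (inv_pos.2 hpos)] at h1
    refine ⟨h3, ?_⟩
    convert h2 using 1
    rw [smul_smul]
    congr 1
    field_simp

/-- The cone over a convex subset of `{φ = 1}` is closed under addition. -/
lemma cone_add (hKcv : Convex ℝ K) {x y : E}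
    (hx : 0 < φ x ∧ (φ x)⁻¹ • x ∈ K) (hy : 0 < φ y ∧ (φ y)⁻¹ • y ∈ K) :
    0 < φ (x + y) ∧ (φ (x + y))⁻¹ • (x + y) ∈ K := by
  obtain ⟨hx0, hxK⟩ := hx
  obtain ⟨hy0, hyK⟩ := hy
  have hs : 0 < φ x + φ y := by positivity
  rw [map_add]
  refine ⟨hs, ?_⟩
  have := hKcv hxK hyK (a := φ x / (φ x + φ y)) (b := φ y / (φ x + φ y))
    (by positivity) (by positivity) (by field_simp)
  convert this using 1
  rw [smul_smul, smul_smul, smul_add]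
  congr 2 <;> field_simp

lemma cone_smul {x : E} {c : ℝ} (hc : 0 < c)
    (hx : 0 < φ x ∧ (φ x)⁻¹ • x ∈ K) : 0 < φ (c • x) ∧ (φ (c • x))⁻¹ • (c • x) ∈ K := by
  obtain ⟨h1, h2⟩ := hx
  rw [map_smul, smul_eq_mul]
  refine ⟨by positivity, ?_⟩
  convert h2 using 1
  rw [smul_smul]
  congr 1
  field_simp

/-- Approximate solutions in `K` of `t v - L v = s x₀`, `s ≥ 0`, given by normalized truncations
of the resolvent series at any `t` that strictly dominates the growth of the orbit. -/
lemma exists_approx_resolvent (hKcv : Convex ℝ K) (hKcp : IsCompact K)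
    (hKsub : K ⊆ {x : E | φ x = 1})
    (hL : ∀ x ∈ K, 0 < φ (L x) ∧ (φ (L x))⁻¹ • L x ∈ K) {x₀ : E} (hx₀ : x₀ ∈ K)
    {t : ℝ} (ht : 0 < t)
    (hlim : Filter.Tendsto (fun n => φ ((L ^ n) x₀) / t ^ n) Filter.atTop (nhds 0))
    {ε : ℝ} (hε : 0 < ε) :
    ∃ v ∈ K, -ε ≤ φ (t • v - L v) ∧
      ‖t • v - L v - φ (t • v - L v) • x₀‖ ≤ ε := by
  obtain ⟨M, hM0, hM⟩ : ∃ M : ℝ, 0 < M ∧ ∀ w ∈ K, ‖w‖ ≤ M := hKcp.isBounded.exists_pos_norm_le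
  -- `p n` is the truncation of the resolvent series to its first `n` terms.
  let p : ℕ → E := fun n => ∑ k ∈ Finset.range n, (t ^ (k + 1))⁻¹ • (L ^ k) x₀
  have hterm : ∀ k, 0 < φ ((t ^ (k + 1))⁻¹ • (L ^ k) x₀) ∧
      (φ ((t ^ (k + 1))⁻¹ • (L ^ k) x₀))⁻¹ • ((t ^ (k + 1))⁻¹ • (L ^ k) x₀) ∈ K :=
    fun k => cone_smul (by positivity) (iterate_mem_cone hKsub hL hx₀ k)
  have hφ0 : φ x₀ = 1 := hKsub hx₀
  have hp : ∀ n, (0 < φ (p (n + 1)) ∧ (φ (p (n + 1)))⁻¹ • p (n + 1) ∈ K) ∧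
      t⁻¹ ≤ φ (p (n + 1)) := by
    intro n
    induction n with
    | zero =>
      have h := hterm 0
      refine ⟨by simpa [p] using h, by simp [p, hφ0]⟩
    | succ n ih =>
      have h : p (n + 1 + 1) = p (n + 1) + (t ^ (n + 1 + 1))⁻¹ • (L ^ (n + 1)) x₀ :=
        Finset.sum_range_succ _ _
      rw [h]
      refine ⟨cone_add hKcv ih.1 (hterm _), ?_⟩
      rw [map_add]
      linarith [ih.2, (hterm (n + 1)).1]
  have htel : ∀ n, t • p n - L (p n) = x₀ - (t ^ n)⁻¹ • (L ^ n) x₀ := by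
    intro n
    induction n with
    | zero => simp [p]
    | succ n ih =>
      have h : p (n + 1) = p n + (t ^ (n + 1))⁻¹ • (L ^ n) x₀ := Finset.sum_range_succ _ _
      have h2 : t • ((t ^ (n + 1))⁻¹ • (L ^ n) x₀) = (t ^ n)⁻¹ • (L ^ n) x₀ := by
        rw [smul_smul]; congr 1; field_simp; ring
      have h3 : L ((L ^ n) x₀) = (L ^ (n + 1)) x₀ := by
        rw [pow_succ', Module.End.mul_apply]
      rw [h, smul_add, map_add, map_smul, h2, h3]
      linear_combination (norm := module) ih
  -- The threshold absorbs both error terms below, since `(φ (p n))⁻¹ ≤ t`.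
  have hδ : 0 < ε / (t * (2 * M + 1)) := by positivity
  obtain ⟨n, hn, hn0⟩ := ((hlim.eventually (gt_mem_nhds hδ)).and
    (Filter.eventually_gt_atTop 0)).exists
  obtain ⟨m, rfl⟩ : ∃ m, n = m + 1 := ⟨n - 1, by omega⟩
  obtain ⟨⟨hc, hv⟩, hlow⟩ := hp m
  obtain ⟨ha, hw⟩ := iterate_mem_cone hKsub hL hx₀ (m + 1)
  set c := φ (p (m + 1)) with hcdef
  set q := φ ((L ^ (m + 1)) x₀) / t ^ (m + 1) with hq
  have hq0 : 0 < q := by positivity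
  set w := (φ ((L ^ (m + 1)) x₀))⁻¹ • (L ^ (m + 1)) x₀ with hwdef
  have hLw : (t ^ (m + 1))⁻¹ • (L ^ (m + 1)) x₀ = q • w := by
    rw [hwdef, smul_smul, hq]; congr 1; field_simp
  have hφw : φ w = 1 := hKsub hw
  have hres : t • (c⁻¹ • p (m + 1)) - L (c⁻¹ • p (m + 1)) = c⁻¹ • (x₀ - q • w) := by
    rw [← hLw, ← htel, map_smul]; module
  have hcinv : c⁻¹ ≤ t := by
    rw [inv_le_comm₀ hc ht]; exact hlow
  have hci0 : 0 < c⁻¹ := inv_pos.2 hc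
  have hsmall : c⁻¹ * q * (2 * M + 1) ≤ ε := by
    have h1 : q * (t * (2 * M + 1)) < ε := (lt_div_iff₀ (by positivity)).1 hn
    have h2 : c⁻¹ * (q * (2 * M + 1)) ≤ t * (q * (2 * M + 1)) :=
      mul_le_mul_of_nonneg_right hcinv (by positivity)
    linarith
  have hcq : 0 < c⁻¹ * q := by positivity
  have hφres : φ (c⁻¹ • (x₀ - q • w)) = c⁻¹ - c⁻¹ * q := by
    simp only [map_smul, map_sub, smul_eq_mul, hφ0, hφw]; ring
  refine ⟨c⁻¹ • p (m + 1), hv, ?_, ?_⟩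
  · rw [hres, hφres]
    nlinarith
  · rw [hres, hφres]
    have h1 : c⁻¹ • (x₀ - q • w) - (c⁻¹ - c⁻¹ * q) • x₀ = (c⁻¹ * q) • (x₀ - w) := by module
    rw [h1, norm_smul, Real.norm_of_nonneg hcq.le]
    have h2 := norm_sub_le x₀ w
    have h3 := hM _ hx₀
    have h4 := hM _ hw
    nlinarith

end slice

/-- Fixed-point argument in the proof of Lemma 4.4 (`eigenvalue`): a linear map
preserving (after normalization by a linear functional `φ`) a nonempty compact
convex subset `K` of the affine hyperplane `{φ = 1}` has an eigenvector in `K`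
with positive eigenvalue. -/
theorem eigenvector_in_slice {E : Type*} [NormedAddCommGroup E]
    [NormedSpace ℝ E] [FiniteDimensional ℝ E]
    (φ : E →ₗ[ℝ] ℝ) (K : Set E) (hKne : K.Nonempty) (hKcp : IsCompact K)
    (hKcv : Convex ℝ K) (hKsub : K ⊆ {x : E | φ x = 1})
    (L : E →ₗ[ℝ] E)
    (hL : ∀ x ∈ K, 0 < φ (L x) ∧ (φ (L x))⁻¹ • L x ∈ K) :
    ∃ v ∈ K, ∃ l : ℝ, 0 < l ∧ L v = l • v := by
  obtain ⟨x₀, hx₀⟩ := hKne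
  have hφ0 : φ x₀ = 1 := hKsub hx₀
  obtain ⟨M, hM0, hM⟩ : ∃ M : ℝ, 0 < M ∧ ∀ w ∈ K, ‖w‖ ≤ M := hKcp.isBounded.exists_pos_norm_le
  have hφc : Continuous φ := φ.continuous_of_finiteDimensional
  have hLc : Continuous L := L.continuous_of_finiteDimensional
  have hpos : ∀ k, 0 < φ ((L ^ k) x₀) := fun k => (iterate_mem_cone hKsub hL hx₀ k).1
  let φ' : E →L[ℝ] ℝ := LinearMap.toContinuousLinearMap φ
  let T : Set ℝ := {t | 0 < t ∧ ∃ D : ℝ, ∀ k, φ ((L ^ k) x₀) ≤ D * t ^ k}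
  -- A norm bound on the orbit gives membership in `T`.
  have hT_of : ∀ t : ℝ, 0 < t → (∃ D : ℝ, ∀ k, ‖(L ^ k) x₀‖ ≤ D * t ^ k) → t ∈ T := by
    rintro t ht ⟨D, hD⟩
    refine ⟨ht, ‖φ'‖ * D, fun k => ?_⟩
    calc φ ((L ^ k) x₀) ≤ ‖φ' ((L ^ k) x₀)‖ := Real.le_norm_self _
      _ ≤ ‖φ'‖ * ‖(L ^ k) x₀‖ := φ'.le_opNorm _
      _ ≤ ‖φ'‖ * (D * t ^ k) := mul_le_mul_of_nonneg_left (hD k) (norm_nonneg _)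
      _ = ‖φ'‖ * D * t ^ k := by ring
  have hTne : T.Nonempty := by
    let L' : E →L[ℝ] E := LinearMap.toContinuousLinearMap L
    refine ⟨‖L'‖ + 1, hT_of _ (by positivity) ⟨‖x₀‖, fun k => ?_⟩⟩
    induction k with
    | zero => simp
    | succ k ih =>
      rw [pow_succ', Module.End.mul_apply]
      have h1 : ‖L ((L ^ k) x₀)‖ ≤ ‖L'‖ * ‖(L ^ k) x₀‖ := L'.le_opNorm _
      have h2 : ‖L'‖ * ‖(L ^ k) x₀‖ ≤ (‖L'‖ + 1) * (‖x₀‖ * (‖L'‖ + 1) ^ k) := by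
        gcongr; linarith
      rw [pow_succ]
      linarith
  have hTbdd : BddBelow T := ⟨0, fun t ht => ht.1.le⟩
  set ρ := sInf T with hρ
  have hρ0 : 0 ≤ ρ := le_csInf hTne fun t ht => ht.1.le
  have hlim : ∀ t, ρ < t →
      Filter.Tendsto (fun n => φ ((L ^ n) x₀) / t ^ n) Filter.atTop (nhds 0) := by
    intro t ht
    obtain ⟨t', ⟨ht'0, D, hD⟩, ht't⟩ := exists_lt_of_csInf_lt hTne ht
    have ht0 : 0 < t := ht'0.trans ht't
    have h1 : Filter.Tendsto (fun n : ℕ => D * (t' / t) ^ n) Filter.atTop (nhds 0) := by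
      simpa using (tendsto_pow_atTop_nhds_zero_of_lt_one (by positivity)
        ((div_lt_one ht0).2 ht't)).const_mul D
    refine squeeze_zero (fun n => div_nonneg (hpos n).le (by positivity)) (fun n => ?_) h1
    rw [div_pow, ← mul_div_assoc]
    exact div_le_div_of_nonneg_right (hD n) (by positivity)
  obtain ⟨v, hvK, hs, hv⟩ : ∃ v ∈ K, 0 ≤ φ (ρ • v - L v) ∧
      ρ • v - L v = φ (ρ • v - L v) • x₀ := by
    have happ : ∀ n : ℕ, ∃ v ∈ K, -(1 / ((n : ℝ) + 1)) ≤ φ ((ρ + 1 / ((n : ℝ) + 1)) • v - L v) ∧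
        ‖(ρ + 1 / ((n : ℝ) + 1)) • v - L v - φ ((ρ + 1 / ((n : ℝ) + 1)) • v - L v) • x₀‖
          ≤ 1 / ((n : ℝ) + 1) := by
      intro n
      have hn : (0 : ℝ) < 1 / ((n : ℝ) + 1) := by positivity
      exact exists_approx_resolvent hKcv hKcp hKsub hL hx₀ (by linarith)
        (hlim _ (by linarith)) hn
    choose u huK hu1 hu2 using happ
    obtain ⟨v, hvK, g, hg, hgv⟩ := hKcp.tendsto_subseq huK
    have hε : Filter.Tendsto (fun n : ℕ => 1 / ((g n : ℝ) + 1)) Filter.atTop (nhds 0) :=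
      (tendsto_one_div_add_atTop_nhds_zero_nat (𝕜 := ℝ)).comp hg.tendsto_atTop
    have hd : Filter.Tendsto (fun n : ℕ => (ρ + 1 / ((g n : ℝ) + 1)) • u (g n) - L (u (g n)))
        Filter.atTop (nhds (ρ • v - L v)) := by
      have h1 := (hε.const_add ρ).smul hgv
      rw [add_zero] at h1
      exact h1.sub ((hLc.tendsto v).comp hgv)
    have hφd := (hφc.tendsto _).comp hd
    refine ⟨v, hvK, ?_, ?_⟩
    · have h1 := le_of_tendsto_of_tendsto' hε.neg hφd fun n => hu1 (g n)
      simpa using h1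
    · have h1 := le_of_tendsto_of_tendsto' (hd.sub (hφd.smul_const x₀)).norm hε
        fun n => hu2 (g n)
      exact sub_eq_zero.1 (norm_le_zero_iff.1 h1)
  have hφv : φ v = 1 := hKsub hvK
  have hLv := (hL v hvK).1
  have hρpos : 0 < ρ := by
    simp only [map_sub, map_smul, smul_eq_mul, hφv] at hs
    linarith
  set s := φ (ρ • v - L v) with hsdef
  rcases hs.eq_or_lt with hs0 | hs0
  · refine ⟨v, hvK, ρ, hρpos, ?_⟩
    rw [← hs0, zero_smul] at hv
    exact (sub_eq_zero.1 hv).symm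
  exfalso
  have hiter : ∀ n, s * ∑ k ∈ Finset.range n, φ ((L ^ k) x₀) / ρ ^ (k + 1)
      = 1 - φ ((L ^ n) v) / ρ ^ n := by
    intro n
    induction n with
    | zero => simp [hφv]
    | succ n ih =>
      have h1 : ρ * φ ((L ^ n) v) - φ ((L ^ (n + 1)) v) = s * φ ((L ^ n) x₀) := by
        have h2 := congrArg (fun z => φ ((L ^ n) z)) hv
        simpa [pow_succ] using h2
      rw [Finset.sum_range_succ, mul_add, ih, ← mul_div_assoc, ← h1]
      field_simp
      ring
  have hsum : Summable fun k => φ ((L ^ k) x₀) / ρ ^ (k + 1) := by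
    refine summable_of_sum_range_le (c := 1 / s)
      (fun k => div_nonneg (hpos k).le (by positivity)) fun n => ?_
    rw [le_div_iff₀ hs0, mul_comm, hiter]
    have h1 : 0 ≤ φ ((L ^ n) v) / ρ ^ n :=
      div_nonneg (iterate_mem_cone hKsub hL hvK n).1.le (by positivity)
    linarith
  have hzero : Filter.Tendsto (fun n => ((ρ⁻¹ • L) ^ n) x₀) Filter.atTop (nhds 0) := by
    have h1 := (hsum.tendsto_atTop_zero).mul_const (ρ * M)
    rw [zero_mul] at h1
    refine squeeze_zero_norm (fun n => ?_) h1
    obtain ⟨ha, hw⟩ := iterate_mem_cone hKsub hL hx₀ n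
    have h2 := hM _ hw
    rw [norm_smul, norm_inv, Real.norm_of_nonneg ha.le, inv_mul_le_iff₀ ha] at h2
    rw [smul_pow, LinearMap.smul_apply, norm_smul, norm_pow, norm_inv,
      Real.norm_of_nonneg hρ0]
    calc ρ⁻¹ ^ n * ‖(L ^ n) x₀‖ ≤ ρ⁻¹ ^ n * (φ ((L ^ n) x₀) * M) := by gcongr
      _ = φ ((L ^ n) x₀) / ρ ^ (n + 1) * (ρ * M) := by
        rw [inv_pow]
        field_simp
        ring
  obtain ⟨r, hr0, hr1, D, hD⟩ := exists_geometric_bound _ _ hzero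
  have hmem : r * ρ ∈ T := by
    refine hT_of _ (by positivity) ⟨D, fun k => ?_⟩
    have h1 := hD k
    rw [smul_pow, LinearMap.smul_apply, norm_smul, norm_pow, norm_inv,
      Real.norm_of_nonneg hρ0, inv_pow, inv_mul_le_iff₀ (by positivity)] at h1
    rw [mul_pow]
    linarith
  have h1 : ρ ≤ r * ρ := csInf_le hTbdd hmem
  nlinarith
end
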